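/- Let n ∈ ℕ, let A be a finite set of words containing the empty word ε and closed under binary longest common prefixes, let B ⊆ A, and let h : A → List ℚ be an injective map such that for all x, y ∈ A: x ≼ y ↔ h(x) ≼ h(y), x ⊑ y ↔ h(x) ⊑ h(y), and h(x ⊓ y) = h(x) ⊓ h(y), and such that the image h(A) has n-gaps above h(B). Let D be a finite set of words such that |D \ A| ≤ n, A ∪ D is closed under binary longest common prefixes, and no d ∈ D is a prefix of any b ∈ B. Then h extends to an injective map h_D : A ∪ D → List ℚ satisfying, for all x, y ∈ A ∪ D: x ≼ y ↔ h_D(x) ≼ h_D(y), x ⊑ y ↔ h_D(x) ⊑ h_D(y), and h_D(x ⊓ y) = h_D(x) ⊓ h_D(y). -/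

import Mathlib

/-!
The words of `D \ A` are added to the domain one at a time, shortest first. Besides being a tree
embedding, the current map has to leave room: for `x ≺ y` already placed, the images differ in
length by more than the number of words still to be placed between `x` and `y`. Initially this
holds by the gap hypothesis if `y` is not below `B`, as at most `n` words are added; and if `y` is
below `B`, then no word of `D` lies between `x` and `y`.

Let `d` be a shortest word still to be placed, `p` its longest prefix already placed, and `q` the
letter following `p` in `d`. Sending the letter after `p` to the letter after `h p` is a finite
order isomorphism between letters, so by the back-and-forth step for dense orders without endpoints
some letter `q'` is related to its range as `q` is to its domain. The image of `d` is `h p`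
followed by `q'`; words above `d` still fit because `d` itself was counted between `p` and them.
-/

namespace CLTL

/-- A word is a finite sequence of rationals. -/
abbrev Word := List ℚ

/-- Lexicographic order on lists over a linear order: `w ⊑ v` iff `w` is a prefix of `v`,
or they branch at some position with the letter of `w` smaller. -/
def lexLe {α : Type*} [LinearOrder α] (w v : List α) : Prop :=
  w <+: v ∨ ∃ (p : List α) (a b : α), a < b ∧ (p ++ [a]) <+: w ∧ (p ++ [b]) <+: v

/-- Longest common prefix of two lists. -/
def lcp {α : Type*} [DecidableEq α] : List α → List α → List α
  | a :: w, b :: v => if a = b then a :: lcp w v else []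
  | _, _ => []

/-- Iterated longest common prefix of a nonempty list of words. -/
def listLCP : List Word → Word
  | [] => []
  | [x] => x
  | x :: xs => lcp x (listLCP xs)

/-- Insertion of an `m`-gap at `u`. -/
def iota (u : Word) (m : ℕ) (w : Word) : Word :=
  if u <+: w then u ++ List.replicate m 0 ++ w.drop u.length else w

/-- The maximal common ancestor tree of a tuple `w` together with constants `C`:
`{ε}` together with all iterated longest common prefixes of nonempty subsets of entries. -/
def MCAT (C : List Word) {k : ℕ} (w : Fin k → Word) : Set Word :=
  insert [] { x | ∃ I : Finset (Fin (k + C.length)),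
    I.Nonempty ∧ x = listLCP (I.toList.map (Fin.append w C.get)) }

/-- `h` is the induced isomorphism witnessing `typ_C(w) = typ_C(v)`. -/
def IsInducedIso (C : List Word) {k : ℕ} (w v : Fin k → Word) (h : Word → Word) : Prop :=
  Set.BijOn h (MCAT C w) (MCAT C v) ∧
  (∀ x ∈ MCAT C w, ∀ y ∈ MCAT C w,
    (x <+: y ↔ h x <+: h y) ∧ (lexLe x y ↔ lexLe (h x) (h y))) ∧
  (∀ c ∈ C, h c = c) ∧
  (∀ i : Fin k, h (w i) = v i)

/-- `typ_C(w) = typ_C(v)`. -/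
def SameTyp (C : List Word) {k : ℕ} (w v : Fin k → Word) : Prop :=
  ∃ h : Word → Word, IsInducedIso C w v h

/-- The stretching condition on an isomorphism `h` of `MCAT_C(w)`:
`|h e| - |h d| ≥ |e| - |d|` whenever `d` is a proper prefix of `e`. -/
def StretchCond (C : List Word) {k : ℕ} (w : Fin k → Word) (h : Word → Word) : Prop :=
  ∀ d ∈ MCAT C w, ∀ e ∈ MCAT C w, d <+: e → d ≠ e →
    e.length + (h d).length ≤ (h e).length + d.length

/-- `w ≼* v` for tuples of words. -/
def Stretch (C : List Word) {k : ℕ} (w v : Fin k → Word) : Prop :=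
  ∃ h : Word → Word, IsInducedIso C w v h ∧ StretchCond C w h

/-- `≼*` on configurations. -/
def ConfigLe (C : List Word) {Q : Type*} {n : ℕ}
    (c d : Q × (Fin n → Word)) : Prop :=
  c.1 = d.1 ∧ Stretch C c.2 d.2

/-- A transition relation is type-invariant. -/
def TypeInvariant (C : List Word) {Q : Type*} {n : ℕ}
    (step : (Q × (Fin n → Word)) → (Q × (Fin n → Word)) → Prop) : Prop :=
  ∀ (q p : Q) (w v w' v' : Fin n → Word),
    step (q, w) (p, v) → SameTyp C (Fin.append w v) (Fin.append w' v') →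
      step (q, w') (p, v')

/-- Finite runs, indexed by `Fin (N+1)`. -/
def IsFinRun {Q : Type*} {n : ℕ}
    (step : (Q × (Fin n → Word)) → (Q × (Fin n → Word)) → Prop)
    {N : ℕ} (r : Fin (N + 1) → Q × (Fin n → Word)) : Prop :=
  ∀ i : Fin N, step (r i.castSucc) (r i.succ)

/-- Infinite runs. -/
def IsInfRun {Q : Type*} {n : ℕ}
    (step : (Q × (Fin n → Word)) → (Q × (Fin n → Word)) → Prop)
    (r : ℕ → Q × (Fin n → Word)) : Prop :=
  ∀ i : ℕ, step (r i) (r (i + 1))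

/-- The pair `(w, v)` (of tuples of equal type) is contracting. -/
def ContractingPair (C : List Word) {k : ℕ} (w v : Fin k → Word) : Prop :=
  ∃ h : Word → Word, IsInducedIso C w v h ∧
    ((∃ d ∈ MCAT C w, h d <+: d ∧ h d ≠ d) ∨
     (∃ d ∈ MCAT C w, ∃ e ∈ MCAT C w,
        d <+: e ∧ d ≠ e ∧ h e = e ∧ d <+: h d ∧ d ≠ h d))

/-- A set of words `T` has `n`-gaps above `B`. -/
def HasGaps (n : ℕ) (T B : Set Word) : Prop :=
  ∀ d ∈ T, ∀ e ∈ T, d <+: e → d ≠ e → (∀ b ∈ B, ¬ e <+: b) → n + d.length < e.length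

open scoped Finset

section Prefix

variable {α : Type*} {s : Set (List α)} {p x y : List α} {a b : α}

lemma exists_concat_prefix_iff : (∃ a, p ++ [a] <+: x) ↔ p <+: x ∧ p ≠ x := by
  constructor
  · rintro ⟨a, ha⟩
    refine ⟨(List.prefix_append p [a]).trans ha, ?_⟩
    rintro rfl
    simpa using ha.length_le
  · rintro ⟨hpx, hne⟩
    exact ⟨_, List.concat_get_prefix hpx
      (hpx.length_le.lt_of_ne fun hlen => hne (hpx.eq_of_length hlen))⟩

lemma eq_of_concat_prefix (ha : p ++ [a] <+: x) (hb : p ++ [b] <+: x) : a = b := by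
  simpa using (List.prefix_of_prefix_length_le ha hb (by simp)).eq_of_length (by simp)

lemma concat_prefix_of_prefix (ha : p ++ [a] <+: y) (hxy : x <+: y) (hpx : p <+: x)
    (hne : p ≠ x) : p ++ [a] <+: x := by
  obtain ⟨b, hb⟩ := exists_concat_prefix_iff.2 ⟨hpx, hne⟩
  rwa [eq_of_concat_prefix ha (hb.trans hxy)]

/-- `p` is the longest prefix of `d` in `s`. For `d ∉ s` it is the parent of `d` in the tree
`s ∪ {d}`. -/
structure IsLongestPrefixIn (s : Set (List α)) (p d : List α) : Prop where
  mem : p ∈ s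
  isPrefix : p <+: d
  prefix_of_mem : ∀ x ∈ s, x <+: d → x <+: p

lemma exists_isLongestPrefixIn (hfin : s.Finite) (hnil : [] ∈ s) (d : List α) :
    ∃ p, IsLongestPrefixIn s p d := by
  obtain ⟨p, ⟨hp, hpd⟩, hmax⟩ := (hfin.subset (s.sep_subset (· <+: d))).exists_maximalFor
    List.length _ ⟨[], hnil, List.nil_prefix⟩
  refine ⟨p, hp, hpd, fun x hx hxd => ?_⟩
  exact (List.prefix_or_prefix_of_prefix hxd hpd).elim id fun hpx =>
    List.prefix_of_prefix_length_le hxd hpd (hmax ⟨hx, hxd⟩ hpx.length_le)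

end Prefix

section Lcp

variable {α : Type*} [DecidableEq α] {q x y : List α}

lemma prefix_lcp_iff : q <+: lcp x y ↔ q <+: x ∧ q <+: y := by
  induction x generalizing q y with
  | nil => simp +contextual [lcp]
  | cons a x ih =>
    cases y with
    | nil => simp +contextual [lcp]
    | cons b y =>
      cases q with
      | nil => simp
      | cons c q =>
        by_cases hab : a = b
        · subst hab
          simp only [lcp, if_true, List.cons_prefix_cons, ih]
          tauto
        · simp only [lcp, if_neg hab, List.prefix_nil, List.cons_prefix_cons, reduceCtorEq,
            false_iff]
          rintro ⟨⟨rfl, -⟩, rfl, -⟩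
          exact hab rfl

lemma lcp_prefix_left (x y : List α) : lcp x y <+: x := (prefix_lcp_iff.1 List.prefix_rfl).1

lemma lcp_prefix_right (x y : List α) : lcp x y <+: y := (prefix_lcp_iff.1 List.prefix_rfl).2

lemma lcp_comm (x y : List α) : lcp x y = lcp y x :=
  antisymm_of (· <+: ·) (prefix_lcp_iff.2 ⟨lcp_prefix_right x y, lcp_prefix_left x y⟩)
    (prefix_lcp_iff.2 ⟨lcp_prefix_right y x, lcp_prefix_left y x⟩)

lemma lcp_eq_left (hxy : x <+: y) : lcp x y = x :=
  antisymm_of (· <+: ·) (lcp_prefix_left x y) (prefix_lcp_iff.2 ⟨List.prefix_rfl, hxy⟩)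

lemma lcp_eq_right (hyx : y <+: x) : lcp x y = y := by
  rw [lcp_comm, lcp_eq_left hyx]

/-- A set of words is lcp-closed if it contains the longest common prefix of any two of its
elements, i.e. if it is a meet-subsemilattice of the tree of all words. -/
def LcpClosed (s : Set (List α)) : Prop :=
  ∀ x ∈ s, ∀ y ∈ s, lcp x y ∈ s

lemma LcpClosed.insert_of_minimal {s t : Set (List α)} {d : List α} (hs : LcpClosed s)
    (ht : LcpClosed t) (hst : s ⊆ t) (hd : d ∈ t) (hmin : ∀ z ∈ t, z ∉ s → z <+: d → z = d) :
    LcpClosed (insert d s) := by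
  have hlcp : ∀ x ∈ s, lcp x d ∈ insert d s := fun x hx => by
    by_cases hxd : lcp x d ∈ s
    · exact Set.mem_insert_of_mem d hxd
    · exact Or.inl (hmin _ (ht x (hst hx) d hd) hxd (lcp_prefix_right x d))
  rintro x (rfl | hx) y (rfl | hy)
  · exact Or.inl (lcp_eq_left List.prefix_rfl)
  · exact lcp_comm x y ▸ hlcp y hy
  · exact hlcp x hx
  · exact Set.mem_insert_of_mem d (hs x hx y hy)

end Lcp

section Room

variable {α β : Type*} [DecidableEq β] {h : List β → List α} {p d y : List β}

lemma card_filter_between_erase_lt {R : Finset (List β)} (hd : d ∈ R) (hpd : p <+: d)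
    (hdy : d <+: y) :
    #{z ∈ R.erase d | d <+: z ∧ z <+: y} < #{z ∈ R | p <+: z ∧ z <+: y} := by
  refine Finset.card_lt_card (Finset.ssubset_iff_of_subset ?_ |>.2 ⟨d, ?_, ?_⟩)
  · intro z
    simp only [Finset.mem_filter, Finset.mem_erase]
    exact fun ⟨⟨_, hz⟩, hdz, hzy⟩ => ⟨hz, hpd.trans hdz, hzy⟩
  · exact Finset.mem_filter.2 ⟨hd, hpd, hdy⟩
  · simp

/-- For `x ≺ y` in `s`, the images under `h` leave room for one letter per word of `t \ s` between
`x` and `y`: this is the invariant under which `h` can be extended from `s` to `t`. -/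
def HasRoom (s t : Finset (List β)) (h : List β → List α) : Prop :=
  ∀ x ∈ s, ∀ y ∈ s, x <+: y → x ≠ y →
    (h x).length + #{z ∈ t \ s | x <+: z ∧ z <+: y} < (h y).length

lemma HasRoom.length_add_one_lt {s t : Finset (List β)} (hroom : HasRoom s t h) (hdt : d ∈ t)
    (hds : d ∉ s) (hp : p ∈ s) (hpd : p <+: d) (hy : y ∈ s) (hdy : d <+: y) :
    (h p).length + 1 < (h y).length := by
  have hpy : p ≠ y := by
    rintro rfl
    exact hds (antisymm_of (· <+: ·) hdy hpd ▸ hy)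
  have hpos : 0 < #{z ∈ t \ s | p <+: z ∧ z <+: y} :=
    Finset.card_pos.2 ⟨d, Finset.mem_filter.2 ⟨Finset.mem_sdiff.2 ⟨hdt, hds⟩, hpd, hdy⟩⟩
  have := hroom p hp y hy (hpd.trans hdy) hpy
  omega

end Room

section Branching

variable {α : Type*} [LinearOrder α] {p q x y : List α}

/-- The words `x` and `y` branch at `q`, with `x` on the left: both properly extend `q`, and the
letter following `q` is smaller in `x` than in `y`. -/
def BranchAt (q x y : List α) : Prop :=
  ∃ a b : α, a < b ∧ q ++ [a] <+: x ∧ q ++ [b] <+: y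

lemma lexLe_iff_prefix_or_branchAt : lexLe x y ↔ x <+: y ∨ ∃ q, BranchAt q x y := Iff.rfl

lemma BranchAt.lcp_eq (hxy : BranchAt q x y) : lcp x y = q := by
  obtain ⟨a, b, hab, ha, hb⟩ := hxy
  have hq : q <+: lcp x y := prefix_lcp_iff.2
    ⟨(exists_concat_prefix_iff.1 ⟨a, ha⟩).1, (exists_concat_prefix_iff.1 ⟨b, hb⟩).1⟩
  by_contra! hne
  exact hab.ne (eq_of_concat_prefix
    (concat_prefix_of_prefix ha (lcp_prefix_left x y) hq hne.symm)
    (concat_prefix_of_prefix hb (lcp_prefix_right x y) hq hne.symm))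

lemma BranchAt.ne_left (hxy : BranchAt q x y) : q ≠ x :=
  let ⟨a, _, _, ha, _⟩ := hxy
  (exists_concat_prefix_iff.1 ⟨a, ha⟩).2

lemma BranchAt.ne_right (hxy : BranchAt q x y) : q ≠ y :=
  let ⟨_, b, _, _, hb⟩ := hxy
  (exists_concat_prefix_iff.1 ⟨b, hb⟩).2

lemma BranchAt.not_prefix (hxy : BranchAt q x y) : ¬ x <+: y := fun h =>
  hxy.ne_left (hxy.lcp_eq.symm.trans (lcp_eq_left h))

lemma BranchAt.not_prefix_swap (hxy : BranchAt q x y) : ¬ y <+: x := fun h =>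
  hxy.ne_right (hxy.lcp_eq.symm.trans (lcp_eq_right h))

lemma BranchAt.not_branchAt_swap (hxy : BranchAt q x y) : ¬ BranchAt p y x := by
  intro hyx
  obtain rfl : p = q := hyx.lcp_eq.symm.trans ((lcp_comm y x).trans hxy.lcp_eq)
  obtain ⟨a, b, hab, ha, hb⟩ := hxy
  obtain ⟨c, d, hcd, hc, hd⟩ := hyx
  rw [eq_of_concat_prefix hc hb, eq_of_concat_prefix hd ha] at hcd
  exact hab.asymm hcd

lemma lexLe_of_branchAt (hxy : BranchAt q x y) : lexLe x y :=
  lexLe_iff_prefix_or_branchAt.2 (Or.inr ⟨q, hxy⟩)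

lemma not_lexLe_of_branchAt (hxy : BranchAt q x y) : ¬ lexLe y x := by
  rw [lexLe_iff_prefix_or_branchAt]
  rintro (hyx | ⟨p, hyx⟩)
  · exact hxy.not_prefix_swap hyx
  · exact hxy.not_branchAt_swap hyx

lemma not_lexLe_of_prefix (hyx : y <+: x) (hne : y ≠ x) : ¬ lexLe x y := by
  rw [lexLe_iff_prefix_or_branchAt]
  rintro (hxy | ⟨q, hxy⟩)
  · exact hne (antisymm_of (· <+: ·) hyx hxy)
  · exact hxy.not_prefix_swap hyx

lemma prefix_or_prefix_or_branchAt (x y : List α) :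
    x <+: y ∨ y <+: x ∨ BranchAt (lcp x y) x y ∨ BranchAt (lcp x y) y x := by
  by_cases hx : lcp x y = x
  · exact Or.inl (hx ▸ lcp_prefix_right x y)
  by_cases hy : lcp x y = y
  · exact Or.inr (Or.inl (hy ▸ lcp_prefix_left x y))
  obtain ⟨a, ha⟩ := exists_concat_prefix_iff.2 ⟨lcp_prefix_left x y, hx⟩
  obtain ⟨b, hb⟩ := exists_concat_prefix_iff.2 ⟨lcp_prefix_right x y, hy⟩
  have hab : a ≠ b := by
    rintro rfl
    simpa using (prefix_lcp_iff.2 ⟨ha, hb⟩).length_le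
  exact Or.inr (Or.inr (hab.lt_or_gt.imp (fun h => ⟨a, b, h, ha, hb⟩) fun h => ⟨b, a, h, hb, ha⟩))

end Branching

section TreeEmbedding

variable {α β : Type*} [LinearOrder α] [LinearOrder β]

/-- `h` embeds the set of words `s` into the words over `α`, as a tree ordered by prefixes and
lexicographically: it preserves and reflects both orders, and it preserves longest common prefixes.
The notion is meant for lcp-closed `s`; otherwise it also constrains `h` outside `s`. -/
def IsTreeEmbeddingOn (s : Set (List β)) (h : List β → List α) : Prop :=
  ∀ x ∈ s, ∀ y ∈ s,
    (x <+: y ↔ h x <+: h y) ∧ (lexLe x y ↔ lexLe (h x) (h y)) ∧ h (lcp x y) = lcp (h x) (h y)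

namespace IsTreeEmbeddingOn

variable {s : Set (List β)} {h h' : List β → List α} {p q x y : List β}

lemma injOn (hh : IsTreeEmbeddingOn s h) : Set.InjOn h s := fun x hx y hy hxy =>
  antisymm_of (· <+: ·) ((hh x hx y hy).1.2 (hxy ▸ List.prefix_rfl))
    ((hh y hy x hx).1.2 (hxy ▸ List.prefix_rfl))

lemma exists_concat_prefix (hh : IsTreeEmbeddingOn s h) (hp : p ∈ s) (hx : x ∈ s) {a : β}
    (ha : p ++ [a] <+: x) : ∃ a', h p ++ [a'] <+: h x := by
  obtain ⟨hpx, hne⟩ := exists_concat_prefix_iff.1 ⟨a, ha⟩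
  exact exists_concat_prefix_iff.2 ⟨(hh p hp x hx).1.1 hpx, hh.injOn.ne hp hx hne⟩

lemma branchAt (hh : IsTreeEmbeddingOn s h) (hx : x ∈ s) (hy : y ∈ s) (hxy : BranchAt q x y) :
    BranchAt (h q) (h x) (h y) := by
  obtain ⟨hpre, hlex, hlcp⟩ := hh x hx y hy
  rcases lexLe_iff_prefix_or_branchAt.1 (hlex.1 (lexLe_of_branchAt hxy)) with h₁ | ⟨r, hr⟩
  · exact absurd (hpre.2 h₁) hxy.not_prefix
  · rwa [← hxy.lcp_eq, hlcp, hr.lcp_eq]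

lemma of_prefix_of_branchAt
    (hpre : ∀ x ∈ s, ∀ y ∈ s, x <+: y → x ≠ y → h x <+: h y ∧ h x ≠ h y)
    (hbranch : ∀ x ∈ s, ∀ y ∈ s, ∀ q, BranchAt q x y → BranchAt (h q) (h x) (h y)) :
    IsTreeEmbeddingOn s h := by
  intro x hx y hy
  rcases eq_or_ne x y with rfl | hne
  · simp only [lexLe_iff_prefix_or_branchAt, lcp_eq_left List.prefix_rfl, List.prefix_rfl,
      true_or, and_self]
  rcases prefix_or_prefix_or_branchAt x y with hxy | hyx | hxy | hyx
  · have hxy' := (hpre x hx y hy hxy hne).1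
    exact ⟨iff_of_true hxy hxy', iff_of_true (Or.inl hxy) (Or.inl hxy'),
      by rw [lcp_eq_left hxy, lcp_eq_left hxy']⟩
  · obtain ⟨hyx', hne'⟩ := hpre y hy x hx hyx hne.symm
    exact ⟨iff_of_false (fun hxy => hne (antisymm_of (· <+: ·) hxy hyx))
        (fun hxy' => hne' (antisymm_of (· <+: ·) hyx' hxy')),
      iff_of_false (not_lexLe_of_prefix hyx hne.symm) (not_lexLe_of_prefix hyx' hne'),
      by rw [lcp_eq_right hyx, lcp_eq_right hyx']⟩
  · have hxy' := hbranch x hx y hy _ hxy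
    exact ⟨iff_of_false hxy.not_prefix hxy'.not_prefix,
      iff_of_true (lexLe_of_branchAt hxy) (lexLe_of_branchAt hxy'), hxy'.lcp_eq.symm⟩
  · have hyx' := hbranch y hy x hx _ hyx
    exact ⟨iff_of_false hyx.not_prefix_swap hyx'.not_prefix_swap,
      iff_of_false (not_lexLe_of_branchAt hyx) (not_lexLe_of_branchAt hyx'),
      by rw [lcp_comm (h x), hyx'.lcp_eq]⟩

lemma congr (hh : IsTreeEmbeddingOn s h) (hs : LcpClosed s) (heq : Set.EqOn h' h s) :
    IsTreeEmbeddingOn s h' := by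
  intro x hx y hy
  rw [heq hx, heq hy, heq (hs x hx y hy)]
  exact hh x hx y hy

lemma cmp_eq_cmp (hh : IsTreeEmbeddingOn s h) (hs : LcpClosed s) (hp : p ∈ s) (hx : x ∈ s)
    (hy : y ∈ s) {a b : β} {a' b' : α} (ha : p ++ [a] <+: x) (hb : p ++ [b] <+: y)
    (ha' : h p ++ [a'] <+: h x) (hb' : h p ++ [b'] <+: h y) : cmp a b = cmp a' b' := by
  have hlt {x y : List β} {a b : β} {a' b' : α} (hx : x ∈ s) (hy : y ∈ s) (ha : p ++ [a] <+: x)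
      (hb : p ++ [b] <+: y) (ha' : h p ++ [a'] <+: h x) (hb' : h p ++ [b'] <+: h y)
      (hab : a < b) : a' < b' := by
    obtain ⟨c, d, hcd, hc, hd⟩ := hh.branchAt hx hy ⟨a, b, hab, ha, hb⟩
    rwa [eq_of_concat_prefix ha' hc, eq_of_concat_prefix hb' hd]
  rcases lt_trichotomy a b with hab | rfl | hba
  · rw [hab.cmp_eq_lt, (hlt hx hy ha hb ha' hb' hab).cmp_eq_lt]
  · -- the letter after `h p` can be read off in the image of the common prefix `lcp x y`
    have hm := hs x hx y hy
    obtain ⟨c, hc⟩ := hh.exists_concat_prefix hp hm (prefix_lcp_iff.2 ⟨ha, hb⟩)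
    have hca := eq_of_concat_prefix (hc.trans ((hh _ hm x hx).1.1 (lcp_prefix_left x y))) ha'
    have hcb := eq_of_concat_prefix (hc.trans ((hh _ hm y hy).1.1 (lcp_prefix_right x y))) hb'
    rw [← hca, ← hcb, cmp_self_eq_eq, cmp_self_eq_eq]
  · rw [hba.cmp_eq_gt, (hlt hy hx hb ha hb' ha' hba).cmp_eq_gt]

lemma exists_letter [DenselyOrdered α] [NoMinOrder α] [NoMaxOrder α] [Nonempty α]
    (hh : IsTreeEmbeddingOn s h) (hs : LcpClosed s) (hfin : s.Finite) (hp : p ∈ s) (q : β) :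
    ∃ q', ∀ x ∈ s, ∀ c c', p ++ [c] <+: x → h p ++ [c'] <+: h x → cmp c q = cmp c' q' := by
  let letters : Set (β × α) := {c | ∃ x ∈ s, p ++ [c.1] <+: x ∧ h p ++ [c.2] <+: h x}
  have hletters : letters.Finite := by
    refine (hfin.biUnion fun x _ => x.finite_toSet.prod (h x).finite_toSet).subset ?_
    rintro c ⟨x, hx, hc, hc'⟩
    exact Set.mem_biUnion hx ⟨hc.subset (by simp), hc'.subset (by simp)⟩
  let f : Order.PartialIso β α := ⟨hletters.toFinset, by
    simp only [Set.Finite.mem_toFinset]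
    rintro a ⟨x, hx, ha, ha'⟩ b ⟨y, hy, hb, hb'⟩
    exact hh.cmp_eq_cmp hs hp hx hy ha hb ha' hb'⟩
  obtain ⟨q', hq'⟩ := f.exists_across q
  exact ⟨q', fun x hx c c' hc hc' => hq' (c, c') (hletters.mem_toFinset.2 ⟨x, hx, hc, hc'⟩)⟩

end IsTreeEmbeddingOn

end TreeEmbedding

section Extension

variable {α β : Type*} [LinearOrder α] [LinearOrder β] {h h' : List β → List α} {p d : List β}

lemma isTreeEmbeddingOn_insert {s : Set (List β)} (hh : IsTreeEmbeddingOn s h)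
    (hs : LcpClosed (insert d s))
    (hbelow : ∀ x ∈ s, x <+: d → x ≠ d → h x <+: h d ∧ h x ≠ h d)
    (habove : ∀ y ∈ s, d <+: y → d ≠ y → h d <+: h y ∧ h d ≠ h y)
    (hbranch : ∀ r ∈ s, ∀ x ∈ s, ∀ a b, r ++ [a] <+: x → r ++ [b] <+: d →
      ∃ a' b', h r ++ [a'] <+: h x ∧ h r ++ [b'] <+: h d ∧ cmp a b = cmp a' b') :
    IsTreeEmbeddingOn (insert d s) h := by
  refine .of_prefix_of_branchAt ?_ ?_
  · rintro x (rfl | hx) y (rfl | hy) hxy hne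
    · exact absurd rfl hne
    · exact habove y hy hxy hne
    · exact hbelow x hx hxy hne
    · exact ⟨(hh x hx y hy).1.1 hxy, hh.injOn.ne hx hy hne⟩
  · rintro x (rfl | hx) y (rfl | hy) r hxy
    · exact absurd List.prefix_rfl hxy.not_prefix
    · have hr : r ∈ s := Set.mem_of_mem_insert_of_ne
        (hxy.lcp_eq ▸ hs x (Or.inl rfl) y (Or.inr hy)) hxy.ne_left
      obtain ⟨a, b, hab, ha, hb⟩ := hxy
      obtain ⟨b', a', hb', ha', hcmp⟩ := hbranch r hr y hy b a hb ha
      exact ⟨a', b', (lt_iff_lt_of_cmp_eq_cmp (cmp_eq_cmp_symm.1 hcmp)).1 hab, ha', hb'⟩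
    · have hr : r ∈ s := Set.mem_of_mem_insert_of_ne
        (hxy.lcp_eq ▸ hs x (Or.inr hx) y (Or.inl rfl)) hxy.ne_right
      obtain ⟨a, b, hab, ha, hb⟩ := hxy
      obtain ⟨a', b', ha', hb', hcmp⟩ := hbranch r hr x hx a b ha hb
      exact ⟨a', b', (lt_iff_lt_of_cmp_eq_cmp hcmp).1 hab, ha', hb'⟩
    · exact hh.branchAt hx hy hxy

lemma IsTreeEmbeddingOn.exists_extension_insert [DenselyOrdered α] [NoMinOrder α] [NoMaxOrder α]
    [Nonempty α] {s : Set (List β)} (hh : IsTreeEmbeddingOn s h) (hfin : s.Finite)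
    (hs : LcpClosed s) (hds : d ∉ s) (hs' : LcpClosed (insert d s))
    (hp : IsLongestPrefixIn s p d)
    (hroom : ∀ y ∈ s, d <+: y → (h p).length + 1 < (h y).length) :
    ∃ h', Set.EqOn h' h s ∧ IsTreeEmbeddingOn (insert d s) h' ∧
      (h' d).length = (h p).length + 1 := by
  obtain ⟨q, hq⟩ := exists_concat_prefix_iff.2 ⟨hp.isPrefix, ne_of_mem_of_not_mem hp.mem hds⟩
  obtain ⟨q', hq'⟩ := hh.exists_letter hs hfin hp.mem q
  let h' := Function.update h d (h p ++ [q'])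
  have hd : h' d = h p ++ [q'] := Function.update_self ..
  have hold : Set.EqOn h' h s := fun x hx => Function.update_of_ne (ne_of_mem_of_not_mem hx hds) ..
  have hlen : (h' d).length = (h p).length + 1 := by
    rw [hd, List.length_append, List.length_singleton]
  have hpd : h p <+: h' d := hd ▸ List.prefix_append ..
  refine ⟨h', hold, isTreeEmbeddingOn_insert (hh.congr hs hold) hs' ?_ ?_ ?_, hlen⟩
  · intro x hx hxd _
    rw [hold hx]
    have hxp := (hh x hx p hp.mem).1.1 (hp.prefix_of_mem x hx hxd)
    exact ⟨hxp.trans hpd, fun heq => by have := hxp.length_le; rw [heq] at this; omega⟩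
  · intro y hy hdy _
    rw [hold hy]
    obtain ⟨c, hc⟩ := hh.exists_concat_prefix hp.mem hy (hq.trans hdy)
    have hcq : c = q' := (cmp_eq_eq_iff c q').1
      ((hq' y hy q c (hq.trans hdy) hc).symm.trans (cmp_self_eq_eq q))
    exact ⟨hd ▸ hcq ▸ hc, fun heq => by have := hroom y hy hdy; rw [← heq] at this; omega⟩
  · intro r hr x hx a b ha hb
    rw [hold hr, hold hx]
    obtain ⟨a', ha'⟩ := hh.exists_concat_prefix hr hx ha
    rcases eq_or_ne r p with rfl | hrp
    · obtain rfl := eq_of_concat_prefix hb hq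
      exact ⟨a', q', ha', hd ▸ List.prefix_rfl, hq' x hx a a' ha ha'⟩
    · have hbp : r ++ [b] <+: p := concat_prefix_of_prefix hb hp.isPrefix
        (hp.prefix_of_mem r hr (exists_concat_prefix_iff.1 ⟨b, hb⟩).1) hrp
      obtain ⟨b', hb'⟩ := hh.exists_concat_prefix hr hp.mem hbp
      exact ⟨a', b', ha', hb'.trans hpd, hh.cmp_eq_cmp hs hr hx hp.mem ha hbp ha' hb'⟩

lemma HasRoom.insert_of_minimal {s t : Finset (List β)} (hroom : HasRoom s t h)
    (hh : IsTreeEmbeddingOn s h) (hdt : d ∈ t) (hds : d ∉ s)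
    (hmin : ∀ z ∈ t, z ∉ s → z <+: d → z = d)
    (hp : IsLongestPrefixIn s p d) (hold : Set.EqOn h' h s)
    (hlen : (h' d).length = (h p).length + 1) : HasRoom (insert d s) t h' := by
  intro x hx y hy hxy hne
  rcases Finset.mem_insert.1 hx with rfl | hxs <;> rcases Finset.mem_insert.1 hy with rfl | hys
  · exact absurd rfl hne
  · have hlt := card_filter_between_erase_lt (Finset.mem_sdiff.2 ⟨hdt, hds⟩) hp.isPrefix hxy
    have hpy : p ≠ y := by
      rintro rfl
      exact hne (antisymm_of (· <+: ·) hxy hp.isPrefix)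
    have := hroom p hp.mem y hys (hp.isPrefix.trans hxy) hpy
    rw [hold hys, hlen, Finset.sdiff_insert]
    omega
  · have hzero : #{z ∈ t \ insert y s | x <+: z ∧ z <+: y} = 0 := by
      simp only [Finset.card_eq_zero, Finset.filter_eq_empty_iff, Finset.mem_sdiff,
        Finset.mem_insert, not_or]
      exact fun z ⟨hzt, hzy, hzs⟩ hz => hzy (hmin z hzt hzs hz.2)
    have := ((hh x hxs p hp.mem).1.1 (hp.prefix_of_mem x hxs hxy)).length_le
    rw [hold hxs, hlen]
    omega
  · rw [hold hxs, hold hys]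
    refine lt_of_le_of_lt ?_ (hroom x hxs y hys hxy hne)
    gcongr
    exact Finset.subset_insert d s

theorem IsTreeEmbeddingOn.exists_extension [DenselyOrdered α] [NoMinOrder α] [NoMaxOrder α]
    [Nonempty α] {s t : Finset (List β)} (hnil : [] ∈ s) (hs : LcpClosed (s : Set (List β)))
    (ht : LcpClosed (t : Set (List β))) (hst : s ⊆ t) (hh : IsTreeEmbeddingOn s h)
    (hroom : HasRoom s t h) :
    ∃ h', Set.EqOn h' h s ∧ IsTreeEmbeddingOn (t : Set (List β)) h' := by
  induction hR : t \ s using Finset.strongInduction generalizing s h with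
  | H R ih =>
    subst hR
    rcases (t \ s).eq_empty_or_nonempty with hemp | hne
    · obtain rfl := hst.antisymm (Finset.sdiff_eq_empty_iff_subset.1 hemp)
      exact ⟨h, Set.eqOn_refl h _, hh⟩
    obtain ⟨d, hd, hshort⟩ := (t \ s).exists_min_image List.length hne
    obtain ⟨hdt, hds⟩ := Finset.mem_sdiff.1 hd
    have hmin : ∀ z ∈ t, z ∉ s → z <+: d → z = d := fun z hzt hzs hzd =>
      hzd.eq_of_length_le (hshort z (Finset.mem_sdiff.2 ⟨hzt, hzs⟩))
    have hs' : LcpClosed (insert d (s : Set (List β))) := hs.insert_of_minimal ht hst hdt hmin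
    obtain ⟨p, hp⟩ := exists_isLongestPrefixIn s.finite_toSet hnil d
    obtain ⟨h₁, hold₁, hh₁, hlen⟩ :=
      hh.exists_extension_insert s.finite_toSet hs hds hs' hp fun _ hy hdy =>
        hroom.length_add_one_lt hdt hds hp.mem hp.isPrefix hy hdy
    rw [← Finset.coe_insert] at hs' hh₁
    obtain ⟨h₂, hold₂, hh₂⟩ := ih (t \ insert d s)
      (Finset.ssubset_iff_of_subset (by gcongr; exact Finset.subset_insert d s) |>.2
        ⟨d, hd, by simp⟩)
      (Finset.mem_insert_of_mem hnil) hs' (Finset.insert_subset hdt hst) hh₁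
      (hroom.insert_of_minimal hh hdt hds hmin hp hold₁ hlen) rfl
    exact ⟨h₂, fun x hx => (hold₂ (Finset.mem_insert_of_mem hx)).trans (hold₁ hx), hh₂⟩

lemma IsTreeEmbeddingOn.hasRoom_union {n : ℕ} {A B D : Finset (List β)} (hBA : B ⊆ A)
    (hh : IsTreeEmbeddingOn (A : Set (List β)) h)
    (hgaps : ∀ d ∈ h '' A, ∀ e ∈ h '' A, d <+: e → d ≠ e → (∀ b ∈ h '' B, ¬ e <+: b) →
      n + d.length < e.length)
    (hDcard : #(D \ A) ≤ n) (hDB : ∀ d ∈ D, ∀ b ∈ B, ¬ d <+: b) : HasRoom A (A ∪ D) h := by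
  intro x hx y hy hxy hne
  rw [Finset.union_sdiff_left]
  have hxy' : h x <+: h y := (hh x hx y hy).1.1 hxy
  have hne' : h x ≠ h y := hh.injOn.ne hx hy hne
  by_cases hyB : ∃ b ∈ B, y <+: b
  · obtain ⟨b, hb, hyb⟩ := hyB
    have hzero : #{z ∈ D \ A | x <+: z ∧ z <+: y} = 0 := by
      simp only [Finset.card_eq_zero, Finset.filter_eq_empty_iff, Finset.mem_sdiff]
      exact fun z hz hxzy => hDB z hz.1 b hb (hxzy.2.trans hyb)
    rw [hzero]
    exact hxy'.length_le.lt_of_ne fun hlen => hne' (hxy'.eq_of_length hlen)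
  · have hgap : n + (h x).length < (h y).length := by
      refine hgaps _ ⟨x, hx, rfl⟩ _ ⟨y, hy, rfl⟩ hxy' hne' ?_
      rintro _ ⟨b, hb, rfl⟩ hyb
      exact hyB ⟨b, hb, (hh y hy b (hBA hb)).1.2 hyb⟩
    have : #{z ∈ D \ A | x <+: z ∧ z <+: y} ≤ #(D \ A) := Finset.card_filter_le _ _
    omega

end Extension

theorem stmt13_general {α β : Type*} [LinearOrder α] [DenselyOrdered α] [NoMinOrder α]
    [NoMaxOrder α] [Nonempty α] [LinearOrder β] {n : ℕ} {A B D : Finset (List β)}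
    {h : List β → List α} (hA0 : [] ∈ A) (hAlcp : ∀ x ∈ A, ∀ y ∈ A, lcp x y ∈ A) (hBA : B ⊆ A)
    (hh : IsTreeEmbeddingOn (A : Set (List β)) h)
    (hgaps : ∀ d ∈ h '' A, ∀ e ∈ h '' A, d <+: e → d ≠ e → (∀ b ∈ h '' B, ¬ e <+: b) →
      n + d.length < e.length)
    (hDcard : #(D \ A) ≤ n) (hDlcp : ∀ x ∈ A ∪ D, ∀ y ∈ A ∪ D, lcp x y ∈ A ∪ D)
    (hDB : ∀ d ∈ D, ∀ b ∈ B, ¬ d <+: b) :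
    ∃ h' : List β → List α, (∀ a ∈ A, h' a = h a) ∧
      IsTreeEmbeddingOn (↑(A ∪ D) : Set (List β)) h' :=
  hh.exists_extension hA0 hAlcp hDlcp Finset.subset_union_left
    (hh.hasRoom_union hBA hgaps hDcard hDB)

/-- The gap extension lemma: an embedding of a finite lcp-closed set `A` whose image has
`n`-gaps above the image of `B ⊆ A` extends to any `D` adding at most `n` new elements,
with `A ∪ D` lcp-closed and no element of `D` a prefix of an element of `B`. -/
theorem stmt13 (n : ℕ) (A B D : Finset Word)
    (hA0 : ([] : Word) ∈ A)
    (hAlcp : ∀ x ∈ A, ∀ y ∈ A, lcp x y ∈ A)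
    (hBA : B ⊆ A)
    (h : Word → Word)
    (hinj : Set.InjOn h ↑A)
    (hpre : ∀ x ∈ A, ∀ y ∈ A, (x <+: y ↔ h x <+: h y))
    (hlex : ∀ x ∈ A, ∀ y ∈ A, (lexLe x y ↔ lexLe (h x) (h y)))
    (hcap : ∀ x ∈ A, ∀ y ∈ A, h (lcp x y) = lcp (h x) (h y))
    (hgaps : HasGaps n (h '' ↑A) (h '' ↑B))
    (hDcard : (D \ A).card ≤ n)
    (hDlcp : ∀ x ∈ A ∪ D, ∀ y ∈ A ∪ D, lcp x y ∈ A ∪ D)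
    (hDB : ∀ d ∈ D, ∀ b ∈ B, ¬ d <+: b) :
    ∃ h' : Word → Word,
      (∀ a ∈ A, h' a = h a) ∧
      Set.InjOn h' ↑(A ∪ D) ∧
      (∀ x ∈ A ∪ D, ∀ y ∈ A ∪ D,
        (x <+: y ↔ h' x <+: h' y) ∧
        (lexLe x y ↔ lexLe (h' x) (h' y)) ∧
        h' (lcp x y) = lcp (h' x) (h' y)) := by
  obtain ⟨h', hext, hh'⟩ := stmt13_general hA0 hAlcp hBA
    (fun x hx y hy => ⟨hpre x hx y hy, hlex x hx y hy, hcap x hx y hy⟩) hgaps hDcard hDlcp hDB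
  exact ⟨h', hext, hh'.injOn, hh'⟩

end CLTL
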